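/- Assume Condition (A1) and the standing assumptions. Then there exist constants H₃, α₄ > 0, depending only on the constants of (A1) and of the standing assumptions, such that for every θ ∈ Θ(K) with I_* ≠ ∅ the normalized Hamming risk (almost full recovery) satisfies (1/|I_*|)·E_θ[ |Î(K)∖I_*| + |I_*∖Î(K)| ] ≤ H₃·(n/|I_*|)^{−(α₄ − 1)}. -/

import Mathlib

open MeasureTheory Finset
open scoped Classical

/-- `ell n k = k * log(q*n/k)` with `q = e^2`; equals `0` at `k = 0` by Lean's conventions. -/
noncomputable def ell (n k : ℕ) : ℝ := (k : ℝ) * Real.log (Real.exp 2 * n / k)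

/-- The selector `Î(K)`: empty if the preselector `Ĩ(K)` is empty, otherwise all coordinates
with `X_i² ≥ K σ² log(q n / |Ĩ(K)|)`, where `q = e²`. -/
noncomputable def ihat {n : ℕ} (K σ : ℝ) (Itil : (Fin n → ℝ) → Finset (Fin n))
    (x : Fin n → ℝ) : Finset (Fin n) :=
  if Itil x = ∅ then ∅
  else Finset.univ.filter fun i =>
    K * σ ^ 2 * Real.log (Real.exp 2 * (n : ℝ) / (Itil x).card) ≤ (x i) ^ 2

/-- Adding one index to a nonempty model increases the penalty by at most `log (q n / s)`. -/
lemma ell_succ_sub_le (n s : ℕ) (hn : 0 < n) (hs : 0 < s) :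
    ell n (s + 1) - ell n s ≤ Real.log (Real.exp 2 * n / s) := by
  have hn' : (0 : ℝ) < n := by exact_mod_cast hn
  have hs' : (0 : ℝ) < s := by exact_mod_cast hs
  unfold ell
  have h : Real.log (Real.exp 2 * n / ((s + 1 : ℕ) : ℝ)) ≤ Real.log (Real.exp 2 * n / s) := by
    apply Real.log_le_log (by positivity)
    gcongr
    simp
  have := mul_le_mul_of_nonneg_left h (Nat.cast_nonneg (α := ℝ) (s + 1))
  push_cast at this ⊢
  linarith

/-- Removing one index from a model of size `s + 1` decreases the penalty by at least
`log (q n / (s + 1)) - 1`. -/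
lemma le_ell_succ_sub (n s : ℕ) (hn : 0 < n) :
    Real.log (Real.exp 2 * n / ((s + 1 : ℕ) : ℝ)) - 1 ≤ ell n (s + 1) - ell n s := by
  have hn' : (0 : ℝ) < n := by exact_mod_cast hn
  unfold ell
  rcases Nat.eq_zero_or_pos s with rfl | hs
  · simp
  have hs' : (0 : ℝ) < s := by exact_mod_cast hs
  have h1 : Real.log (Real.exp 2 * n / s)
      = Real.log (Real.exp 2 * n / ((s + 1 : ℕ) : ℝ)) + Real.log (((s + 1 : ℕ) : ℝ) / s) := by
    rw [← Real.log_mul (by positivity) (by positivity)]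
    congr 1
    field_simp
  have h2 : Real.log (((s + 1 : ℕ) : ℝ) / s) ≤ ((s + 1 : ℕ) : ℝ) / s - 1 :=
    Real.log_le_sub_one_of_pos (by positivity)
  have h3 : (s : ℝ) * Real.log (((s + 1 : ℕ) : ℝ) / s) ≤ 1 := by
    calc _ ≤ (s : ℝ) * (((s + 1 : ℕ) : ℝ) / s - 1) := by gcongr
      _ = 1 := by push_cast; field_simp; ring
  rw [h1]
  push_cast at h3 ⊢
  linarith

lemma two_le_log_exp_two_mul_div {n s : ℕ} (hs : 0 < s) (hsn : s ≤ n) :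
    2 ≤ Real.log (Real.exp 2 * n / s) := by
  have hs' : (0 : ℝ) < s := by exact_mod_cast hs
  have hsn' : (s : ℝ) ≤ n := by exact_mod_cast hsn
  have hn' : (0 : ℝ) < n := hs'.trans_le hsn'
  rw [Real.le_log_iff_exp_le (by positivity), le_div_iff₀ hs']
  gcongr

/-- Coordinates outside a nonempty penalized minimizer are small. -/
lemma sq_le_of_notMem_minimizer {n : ℕ} {θ : Fin n → ℝ} {c : ℝ} (hc : 0 ≤ c)
    {S : Finset (Fin n)} (hS : S.Nonempty)
    (hmin : ∀ I : Finset (Fin n),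
      (∑ i ∈ Sᶜ, θ i ^ 2) + c * ell n S.card ≤ (∑ i ∈ Iᶜ, θ i ^ 2) + c * ell n I.card)
    {i : Fin n} (hi : i ∉ S) :
    θ i ^ 2 ≤ c * Real.log (Real.exp 2 * n / S.card) := by
  have h := hmin (insert i S)
  rw [Finset.card_insert_of_notMem hi, Finset.compl_insert,
    ← Finset.add_sum_erase Sᶜ _ (Finset.mem_compl.2 hi)] at h
  have h2 := mul_le_mul_of_nonneg_left
    (ell_succ_sub_le n S.card i.pos hS.card_pos) hc
  linarith

/-- Coordinates inside a penalized minimizer are large. -/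
lemma le_sq_of_mem_minimizer {n : ℕ} {θ : Fin n → ℝ} {c : ℝ} (hc : 0 ≤ c)
    {S : Finset (Fin n)}
    (hmin : ∀ I : Finset (Fin n),
      (∑ i ∈ Sᶜ, θ i ^ 2) + c * ell n S.card ≤ (∑ i ∈ Iᶜ, θ i ^ 2) + c * ell n I.card)
    {i : Fin n} (hi : i ∈ S) :
    c * (Real.log (Real.exp 2 * n / S.card) - 1) ≤ θ i ^ 2 := by
  have h := hmin (S.erase i)
  rw [Finset.compl_erase, Finset.sum_insert (by simpa using hi)] at h
  have h2 := mul_le_mul_of_nonneg_left (le_ell_succ_sub n (S.erase i).card i.pos) hc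
  rw [Finset.card_erase_add_one hi] at h2
  linarith

/-- A small signal whose observation exceeds the threshold has large noise. -/
lemma le_noise_sq_of_false_positive {C K A σ L m x t : ℝ} (hC : 0 < C) (hσ : 0 < σ) (hL : 2 ≤ L)
    (ht : t ^ 2 ≤ A * σ ^ 2 * L) (hx : K * σ ^ 2 * (L - m) ≤ x ^ 2) :
    C + ((K / 2 - A - C) * L - K / 2 * m) ≤ ((x - t) / σ) ^ 2 := by
  obtain ⟨z, rfl⟩ : ∃ z, x = t + σ * z := ⟨(x - t) / σ, by field_simp; ring⟩
  have hz : (t + σ * z - t) / σ = z := by field_simp; ring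
  rw [hz]
  have hσ2 : 0 < σ ^ 2 := by positivity
  have h1 : (t + σ * z) ^ 2 ≤ 2 * t ^ 2 + 2 * (σ ^ 2 * z ^ 2) := by
    nlinarith [sq_nonneg (t - σ * z)]
  have h2 : σ ^ 2 * (K / 2 * (L - m) - A * L) ≤ σ ^ 2 * z ^ 2 := by nlinarith
  have h3 := le_of_mul_le_mul_left h2 hσ2
  nlinarith

/-- A large signal whose observation is below the threshold has large noise. -/
lemma le_noise_sq_of_false_negative {C K A B σ L m x t : ℝ} (hC : 0 < C) (hA : 0 < A)
    (hσ : 0 < σ) (hL : 2 ≤ L) (hAK : K / 2 + (C / 2 + B) ≤ A / 6)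
    (ht : A * σ ^ 2 * (L - 1) ≤ t ^ 2) (hx : x ^ 2 ≤ K * σ ^ 2 * (L + m)) :
    C + (B * L - K / 2 * m) ≤ ((x - t) / σ) ^ 2 := by
  obtain ⟨z, rfl⟩ : ∃ z, x = t + σ * z := ⟨(x - t) / σ, by field_simp; ring⟩
  have hz : (t + σ * z - t) / σ = z := by field_simp; ring
  rw [hz]
  have hσ2 : 0 < σ ^ 2 := by positivity
  have h1 : t ^ 2 ≤ 3 / 2 * (t + σ * z) ^ 2 + 3 * (σ ^ 2 * z ^ 2) := by
    nlinarith [sq_nonneg (t + 3 * (σ * z))]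
  have h2 : σ ^ 2 * (A * (L - 1) / 3 - K / 2 * (L + m)) ≤ σ ^ 2 * z ^ 2 := by nlinarith
  have h3 := le_of_mul_le_mul_left h2 hσ2
  have h4 : A * L / 2 ≤ A * (L - 1) := by nlinarith
  have h5 := mul_le_mul_of_nonneg_right hAK (by linarith : (0 : ℝ) ≤ L)
  nlinarith

/-- The expected cardinality of a random finite set is at most the sum of the inclusion
probabilities, without measurability assumptions. -/
lemma lintegral_card_le_sum_measure_mem {Ω ι : Type*} [MeasurableSpace Ω] [Fintype ι]
    (μ : Measure Ω) (F : Ω → Finset ι) :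
    ∫⁻ x, ((F x).card : ENNReal) ∂μ ≤ ∑ i, μ {x | i ∈ F x} := by
  calc ∫⁻ x, ((F x).card : ENNReal) ∂μ
      ≤ ∫⁻ x, ∑ i, (toMeasurable μ {x | i ∈ F x}).indicator 1 x ∂μ := by
        apply lintegral_mono
        intro x
        have hcard : ((F x).card : ENNReal) = ∑ i, if i ∈ F x then 1 else 0 := by simp
        simp only [hcard]
        apply Finset.sum_le_sum
        intro i _
        by_cases h : i ∈ F x
        · have hm : x ∈ toMeasurable μ {x | i ∈ F x} := subset_toMeasurable μ _ h
          simp [h, hm]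
        · simp [h]
    _ = ∑ i, μ {x | i ∈ F x} := by
        rw [lintegral_finsetSum _ fun i _ =>
          measurable_one.indicator (measurableSet_toMeasurable μ {x | i ∈ F x})]
        simp [lintegral_indicator_one (measurableSet_toMeasurable μ _)]

/-- A single-coordinate exponential tail bound extends to negative deviations. -/
lemma coord_tail {n : ℕ} {C H a σ : ℝ} (ha : 0 < a)
    (μ : Measure (Fin n → ℝ)) [IsProbabilityMeasure μ] (θ : Fin n → ℝ)
    (h : ∀ (I : Finset (Fin n)) (M : ℝ), 0 ≤ M →
      μ {x | C * I.card + M ≤ ∑ i ∈ I, ((x i - θ i) / σ) ^ 2}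
        ≤ ENNReal.ofReal (H * Real.exp (-a * M))) (i : Fin n) (m : ℝ) :
    μ {x | C + m ≤ ((x i - θ i) / σ) ^ 2} ≤ ENNReal.ofReal (H * Real.exp (-a * m)) := by
  rcases le_total 0 m with hm | hm
  · simpa using h {i} m hm
  · have hH : 1 ≤ H := by simpa using h ∅ 0 le_rfl
    refine prob_le_one.trans ?_
    rw [ENNReal.one_le_ofReal]
    have : 1 ≤ Real.exp (-a * m) := Real.one_le_exp (by nlinarith)
    nlinarith

/-- Conversion of the exponential coordinatewise error bound into a power of the sparsity ratio. -/
lemma inv_mul_mul_exp_log_le_rpow {C a n s : ℝ} (hC : 0 ≤ C) (ha : 0 ≤ a) (hn : 0 < n)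
    (hs : 0 < s) :
    s⁻¹ * (n * (C * Real.exp (-a * Real.log (Real.exp 2 * n / s))))
      ≤ C * (n / s) ^ (-(a - 1)) := by
  have hr : 0 < n / s := by positivity
  have hlog : Real.log (n / s) ≤ Real.log (Real.exp 2 * n / s) := by
    apply Real.log_le_log hr
    rw [mul_div_assoc]
    exact le_mul_of_one_le_left hr.le (Real.one_le_exp (by norm_num))
  have hexp : Real.exp (-a * Real.log (Real.exp 2 * n / s)) ≤ (n / s) ^ (-a) := by
    rw [Real.rpow_def_of_pos hr]
    apply Real.exp_le_exp.2
    nlinarith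
  rw [show -(a - 1) = 1 + -a by ring, Real.rpow_add hr, Real.rpow_one]
  calc s⁻¹ * (n * (C * Real.exp (-a * Real.log (Real.exp 2 * n / s))))
      = C * (n / s * Real.exp (-a * Real.log (Real.exp 2 * n / s))) := by ring
    _ ≤ C * (n / s * (n / s) ^ (-a)) := by gcongr

theorem stmt_9 (Cξ Hξ αξ : ℝ) (hCξ : 0 < Cξ) (hHξ : 0 < Hξ) (hαξ : 0 < αξ)
    (K A₀ A₁ α₀ α₁' M₁ δ : ℝ)
    (hK : 0 < K) (hA₀ : 0 < A₀) (hA₁ : 0 < A₁) (hα₀ : 0 < α₀) (hα₁' : 0 < α₁')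
    (hM₁ : 1 < M₁) (hδ : 0 < δ) (hδ1 : δ < 1) (hA01 : A₀ ≤ A₁)
    (hKC : A₀ + Cξ < K / 2)
    (hA1big : K / 2 + αξ⁻¹ * ((Cξ * αξ + 2) / 2 + 1) < A₁ / 6) :
    ∃ H₃ α₄ : ℝ, 0 < H₃ ∧ 0 < α₄ ∧
      ∀ (n : ℕ) (σ : ℝ), 0 < σ →
        ∀ P : (Fin n → ℝ) → Measure (Fin n → ℝ),
          (∀ θ, IsProbabilityMeasure (P θ)) →
          (∀ (θ : Fin n → ℝ) (I : Finset (Fin n)) (M : ℝ), 0 ≤ M →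
              P θ {x | Cξ * I.card + M ≤ ∑ i ∈ I, ((x i - θ i) / σ) ^ 2}
                ≤ ENNReal.ofReal (Hξ * Real.exp (-αξ * M))) →
          ∀ Itil : (Fin n → ℝ) → Finset (Fin n),
            (∀ (x : Fin n → ℝ) (I : Finset (Fin n)),
                (∑ i ∈ (Itil x)ᶜ, x i ^ 2) + K * σ ^ 2 * ell n (Itil x).card
                  ≤ (∑ i ∈ Iᶜ, x i ^ 2) + K * σ ^ 2 * ell n I.card) →
            ∀ Istar : ℝ → (Fin n → ℝ) → Finset (Fin n),
              (∀ (A : ℝ) (θ : Fin n → ℝ), 0 < A → ∀ I : Finset (Fin n),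
                  (∑ i ∈ (Istar A θ)ᶜ, θ i ^ 2) + A * σ ^ 2 * ell n (Istar A θ).card
                    ≤ (∑ i ∈ Iᶜ, θ i ^ 2) + A * σ ^ 2 * ell n I.card) →
              (∀ (θ : Fin n → ℝ) (M : ℝ), 0 ≤ M →
                  P θ {x | M₁ * (Istar A₀ θ).card + M ≤ ((Itil x).card : ℝ)}
                    ≤ ENNReal.ofReal (Hξ / (1 - Real.exp (-1)) *
                        Real.exp (-α₀ * ell n (Istar A₀ θ).card - α₀ * M / 2))) →
              (∀ θ : Fin n → ℝ,
                  P θ {x | ((Itil x).card : ℝ) ≤ δ * (Istar A₁ θ).card}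
                    ≤ ENNReal.ofReal (Hξ / (1 - Real.exp (-1)) *
                        Real.exp (-α₁' * ell n (Istar A₁ θ).card))) →
              ∀ θ : Fin n → ℝ, Istar A₁ θ = Istar A₀ θ → Istar A₁ θ ≠ ∅ →
                (∫⁻ x, ENNReal.ofReal
                    ((((ihat K σ Itil x \ Istar A₁ θ).card : ℝ) +
                        ((Istar A₁ θ \ ihat K σ Itil x).card : ℝ)) /
                      ((Istar A₁ θ).card : ℝ)) ∂(P θ))
                  ≤ ENNReal.ofReal
                      (H₃ * ((n : ℝ) / ((Istar A₁ θ).card : ℝ)) ^ (-(α₄ - 1))) := by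
  set H₀ : ℝ := Hξ / (1 - Real.exp (-1)) with hH₀
  have hH₀pos : 0 < H₀ := div_pos hHξ (by
    have : Real.exp (-1) < 1 := by simp
    linarith)
  set b : ℝ := αξ * (K / 2 - A₀ - Cξ) with hb
  have hbpos : 0 < b := mul_pos hαξ (by linarith)
  set D₁ : ℝ := Hξ * Real.exp (αξ * (K / 2 * Real.log M₁)) with hD₁
  set D₂ : ℝ := Hξ * Real.exp (αξ * (K / 2 * (-Real.log δ))) with hD₂
  have hD₁pos : 0 < D₁ := by positivity
  have hD₂pos : 0 < D₂ := by positivity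
  set a : ℝ := min (min α₀ α₁') (min b 2) with ha
  have hapos : 0 < a := by
    simp only [ha, lt_min_iff]
    exact ⟨⟨hα₀, hα₁'⟩, hbpos, by norm_num⟩
  have haα₀ : a ≤ α₀ := (min_le_left _ _).trans (min_le_left _ _)
  have haα₁ : a ≤ α₁' := (min_le_left _ _).trans (min_le_right _ _)
  have hab : a ≤ b := (min_le_right _ _).trans (min_le_left _ _)
  have ha2 : a ≤ 2 := (min_le_right _ _).trans (min_le_right _ _)
  refine ⟨H₀ + H₀ + (D₁ + D₂), a, by positivity, hapos, ?_⟩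
  intro n σ hσ P hP hA1 Itil _ Istar hIstar hover hunder θ hEq hne
  have := hP θ
  have hminA₀ := hIstar A₀ θ hA₀
  have hminA₁ := hIstar A₁ θ hA₁
  have hover' := hover θ 0 le_rfl
  have hunder' := hunder θ
  rw [← hEq] at hminA₀ hover'
  set S := Istar A₁ θ with hS
  have hSne : S.Nonempty := Finset.nonempty_iff_ne_empty.2 hne
  have hs : 0 < S.card := hSne.card_pos
  have hsn : S.card ≤ n := by simpa using S.card_le_univ
  have hn : 0 < n := hs.trans_le hsn
  have hs' : (0 : ℝ) < S.card := by exact_mod_cast hs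
  have hs1 : (1 : ℝ) ≤ S.card := by exact_mod_cast hs
  have hn' : (0 : ℝ) < n := by exact_mod_cast hn
  set L : ℝ := Real.log (Real.exp 2 * n / S.card) with hLdef
  have hL : 2 ≤ L := two_le_log_exp_two_mul_div hs hsn
  have hell : L ≤ ell n S.card := by
    change L ≤ (S.card : ℝ) * L
    nlinarith
  have hlog : ∀ c : ℝ, 0 < c → Real.log (Real.exp 2 * n / (c * S.card)) = L - Real.log c := by
    intro c hc
    rw [hLdef, ← Real.log_div (by positivity) hc.ne']
    congr 1
    field_simp
  set F : (Fin n → ℝ) → Finset (Fin n) :=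
    fun x => (ihat K σ Itil x \ S) ∪ (S \ ihat K σ Itil x) with hF
  set Bo : Set (Fin n → ℝ) := {x | M₁ * S.card + 0 ≤ ((Itil x).card : ℝ)} with hBo
  set Bu : Set (Fin n → ℝ) := {x | ((Itil x).card : ℝ) ≤ δ * S.card} with hBu
  set E : Fin n → ℝ → Set (Fin n → ℝ) :=
    fun i m => {x | Cξ + m ≤ ((x i - θ i) / σ) ^ 2} with hE
  set m₁ : ℝ := (K / 2 - A₀ - Cξ) * L - K / 2 * Real.log M₁ with hm₁
  set m₂ : ℝ := 2 / αξ * L - K / 2 * (-Real.log δ) with hm₂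
  have hAK : K / 2 + (Cξ / 2 + 2 / αξ) ≤ A₁ / 6 := by
    have : αξ⁻¹ * ((Cξ * αξ + 2) / 2 + 1) = Cξ / 2 + 2 / αξ := by
      field_simp
      ring
    linarith
  have hsub : ∀ i, {x | i ∈ F x} ⊆ (Bo ∪ Bu) ∪ (E i m₁ ∪ E i m₂) := by
    intro i x hx
    by_cases hbad : x ∈ Bo ∪ Bu
    · exact Or.inl hbad
    right
    obtain ⟨hxo, hxu⟩ : (Itil x).card < M₁ * S.card ∧ δ * S.card < (Itil x).card := by
      simpa [hBo, hBu] using hbad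
    have hIpos : (0 : ℝ) < (Itil x).card := lt_trans (by positivity) hxu
    have hIne : Itil x ≠ ∅ := by
      rintro h
      simp [h] at hIpos
    have hlow : L - Real.log M₁ ≤ Real.log (Real.exp 2 * n / (Itil x).card) := by
      rw [← hlog M₁ (by linarith)]
      apply Real.log_le_log (by positivity)
      gcongr
    have hupp : Real.log (Real.exp 2 * n / (Itil x).card) ≤ L + -Real.log δ := by
      rw [← sub_eq_add_neg, ← hlog δ hδ]
      apply Real.log_le_log (by positivity)
      gcongr
    have hKσ : 0 ≤ K * σ ^ 2 := by positivity
    simp only [hF, Set.mem_ofPred_eq, Finset.mem_union, Finset.mem_sdiff, ihat, if_neg hIne,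
      Finset.mem_filter, Finset.mem_univ, true_and, not_le] at hx
    rcases hx with ⟨hx, hiS⟩ | ⟨hiS, hx⟩
    · left
      exact le_noise_sq_of_false_positive hCξ hσ hL
        (sq_le_of_notMem_minimizer (by positivity) hSne hminA₀ hiS)
        ((mul_le_mul_of_nonneg_left hlow hKσ).trans hx)
    · right
      exact le_noise_sq_of_false_negative hCξ hA₁ hσ hL hAK
        (le_sq_of_mem_minimizer (by positivity) hminA₁ hiS)
        (hx.le.trans (mul_le_mul_of_nonneg_left hupp hKσ))
  have hexp : ∀ c y : ℝ, a ≤ c → L ≤ y → Real.exp (-c * y) ≤ Real.exp (-a * L) := by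
    intro c y hc hy
    apply Real.exp_le_exp.2
    nlinarith
  have hWi : ∀ i, P θ ({x | i ∈ F x})
      ≤ ENNReal.ofReal ((H₀ + H₀ + (D₁ + D₂)) * Real.exp (-a * L)) := by
    intro i
    have hPo : P θ Bo ≤ ENNReal.ofReal (H₀ * Real.exp (-a * L)) := by
      refine hover'.trans (ENNReal.ofReal_le_ofReal ?_)
      have := hexp α₀ _ haα₀ hell
      rw [show -α₀ * ell n S.card - α₀ * 0 / 2 = -α₀ * ell n S.card by ring]
      gcongr
    have hPu : P θ Bu ≤ ENNReal.ofReal (H₀ * Real.exp (-a * L)) := by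
      refine hunder'.trans (ENNReal.ofReal_le_ofReal ?_)
      have := hexp α₁' _ haα₁ hell
      gcongr
    have hP₁ : P θ (E i m₁) ≤ ENNReal.ofReal (D₁ * Real.exp (-a * L)) := by
      refine (coord_tail hαξ (P θ) θ (hA1 θ) i m₁).trans (ENNReal.ofReal_le_ofReal ?_)
      have := hexp b L hab le_rfl
      rw [show -αξ * m₁ = αξ * (K / 2 * Real.log M₁) + -b * L by rw [hm₁, hb]; ring,
        Real.exp_add, ← mul_assoc]
      gcongr
    have hP₂ : P θ (E i m₂) ≤ ENNReal.ofReal (D₂ * Real.exp (-a * L)) := by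
      refine (coord_tail hαξ (P θ) θ (hA1 θ) i m₂).trans (ENNReal.ofReal_le_ofReal ?_)
      have := hexp 2 L ha2 le_rfl
      rw [show -αξ * m₂ = αξ * (K / 2 * (-Real.log δ)) + -2 * L by
          rw [hm₂]; field_simp; ring,
        Real.exp_add, ← mul_assoc]
      gcongr
    calc P θ ({x | i ∈ F x}) ≤ P θ ((Bo ∪ Bu) ∪ (E i m₁ ∪ E i m₂)) := measure_mono (hsub i)
      _ ≤ (P θ Bo + P θ Bu) + (P θ (E i m₁) + P θ (E i m₂)) :=
          (measure_union_le _ _).trans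
            (add_le_add (measure_union_le _ _) (measure_union_le _ _))
      _ ≤ (ENNReal.ofReal (H₀ * Real.exp (-a * L)) + ENNReal.ofReal (H₀ * Real.exp (-a * L)))
          + (ENNReal.ofReal (D₁ * Real.exp (-a * L)) + ENNReal.ofReal (D₂ * Real.exp (-a * L))) :=
          add_le_add (add_le_add hPo hPu) (add_le_add hP₁ hP₂)
      _ = _ := by
          rw [← ENNReal.ofReal_add (by positivity) (by positivity),
            ← ENNReal.ofReal_add (by positivity) (by positivity),
            ← ENNReal.ofReal_add (by positivity) (by positivity)]
          congr 1
          ring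
  have hint : ∀ x, ENNReal.ofReal
      ((((ihat K σ Itil x \ S).card : ℝ) + ((S \ ihat K σ Itil x).card : ℝ)) / (S.card : ℝ))
      = ENNReal.ofReal (S.card : ℝ)⁻¹ * ((F x).card : ENNReal) := by
    intro x
    have hcard : (F x).card = (ihat K σ Itil x \ S).card + (S \ ihat K σ Itil x).card :=
      Finset.card_union_of_disjoint disjoint_sdiff_sdiff
    rw [hcard, ← ENNReal.ofReal_natCast, ← ENNReal.ofReal_mul (by positivity)]
    congr 1
    push_cast
    field_simp
  simp_rw [hint]
  rw [lintegral_const_mul' _ _ ENNReal.ofReal_ne_top]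
  calc ENNReal.ofReal (S.card : ℝ)⁻¹ *
        ∫⁻ x, ((F x).card : ENNReal) ∂(P θ)
      ≤ ENNReal.ofReal (S.card : ℝ)⁻¹ *
        ∑ _i : Fin n, ENNReal.ofReal ((H₀ + H₀ + (D₁ + D₂)) * Real.exp (-a * L)) := by
        gcongr
        exact (lintegral_card_le_sum_measure_mem _ _).trans (Finset.sum_le_sum fun i _ => hWi i)
    _ = ENNReal.ofReal ((S.card : ℝ)⁻¹ *
          (n * ((H₀ + H₀ + (D₁ + D₂)) * Real.exp (-a * L)))) := by
        rw [Finset.sum_const, Finset.card_univ, Fintype.card_fin, nsmul_eq_mul,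
          ← ENNReal.ofReal_natCast, ← ENNReal.ofReal_mul (by positivity),
          ← ENNReal.ofReal_mul (by positivity)]
    _ ≤ _ := ENNReal.ofReal_le_ofReal
        (inv_mul_mul_exp_log_le_rpow (by positivity) hapos.le hn' hs')
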